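/- Let Λc ⊆ Λ be nested lattices in ℝⁿ with finite quotient group Λ/Λc of cardinality M, and let h1, h2 be nonzero coprime integers such that no nonzero element of Λ/Λc has order dividing h1 or h2. Fix P > 0 and let g(w) = (2πP)^{−n/2} exp(−‖w‖²/(2P)). For each coset c of Λc in Λ let G(c) = Σ_{u∈c} g(u). For each coset x of Λc in Λ and w ∈ ℝⁿ define P_x(w) = (1/M) Σ_{cosets y} Σ_{u ∈ x, v ∈ y with h1·u + h2·v = w} (g(u)/G(x))·(g(v)/G(y)), and let P̄(w) = (1/M) Σ_{cosets x} P_x(w). Let ε = ε_{Λc}(√(P/(h1²+h2²))) be the flatness factor of Λc at parameter √(P/(h1²+h2²)). If ε < 1/2, then for every coset x of Λc in Λ, the variational distance satisfies Σ_{w ∈ Λ} |P_x(w) − P̄(w)| ≤ 16ε. -/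

import Mathlib

noncomputable section

/-- The Gaussian density `g(w) = (2πP)^{−n/2}·exp(−‖w‖²/(2P))` on `ℝⁿ`. -/
def gaussDensity {n : ℕ} (P : ℝ) (w : EuclideanSpace ℝ (Fin n)) : ℝ :=
  (2 * Real.pi * P) ^ (-(n : ℝ) / 2) * Real.exp (-‖w‖ ^ 2 / (2 * P))

/-- The coset of `Λc` in `Λ` corresponding to an element `c` of the quotient group `Λ/Λc`,
viewed as a subset of `ℝⁿ`. -/
def coset {n : ℕ} (Λ Λc : Submodule ℤ (EuclideanSpace ℝ (Fin n)))
    (c : Λ ⧸ Λc.comap Λ.subtype) : Set (EuclideanSpace ℝ (Fin n)) :=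
  {u | ∃ hu : u ∈ Λ, (Submodule.Quotient.mk (⟨u, hu⟩ : Λ) : Λ ⧸ Λc.comap Λ.subtype) = c}

/-- The total mass `G(c) = Σ_{u∈c} g(u)` of the Gaussian density on the coset `c`. -/
def cosetMass {n : ℕ} (Λ Λc : Submodule ℤ (EuclideanSpace ℝ (Fin n))) (P : ℝ)
    (c : Λ ⧸ Λc.comap Λ.subtype) : ℝ :=
  ∑' u : coset Λ Λc c, gaussDensity P (u : EuclideanSpace ℝ (Fin n))

/-- The conditional distribution of the relay's observation `W = h₁·U + h₂·V` given the
message (coset) `x`: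
`P_x(w) = (1/M)·Σ_{cosets y} Σ_{u∈x, v∈y, h₁·u+h₂·v=w} (g(u)/G(x))·(g(v)/G(y))`. -/
def condDist {n : ℕ} (Λ Λc : Submodule ℤ (EuclideanSpace ℝ (Fin n))) (P : ℝ) (h₁ h₂ : ℤ)
    (x : Λ ⧸ Λc.comap Λ.subtype) (w : EuclideanSpace ℝ (Fin n)) : ℝ :=
  (1 / (Nat.card (Λ ⧸ Λc.comap Λ.subtype) : ℝ)) *
    ∑' y : Λ ⧸ Λc.comap Λ.subtype,
      ∑' p : {p : EuclideanSpace ℝ (Fin n) × EuclideanSpace ℝ (Fin n) //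
          p.1 ∈ coset Λ Λc x ∧ p.2 ∈ coset Λ Λc y ∧
            (h₁ : ℝ) • p.1 + (h₂ : ℝ) • p.2 = w},
        (gaussDensity P p.val.1 / cosetMass Λ Λc P x) *
          (gaussDensity P p.val.2 / cosetMass Λ Λc P y)

/-- The unconditional distribution `P̄(w) = (1/M)·Σ_{cosets x} P_x(w)` of the observation. -/
def avgDist {n : ℕ} (Λ Λc : Submodule ℤ (EuclideanSpace ℝ (Fin n))) (P : ℝ) (h₁ h₂ : ℤ)
    (w : EuclideanSpace ℝ (Fin n)) : ℝ :=
  (1 / (Nat.card (Λ ⧸ Λc.comap Λ.subtype) : ℝ)) *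
    ∑' x : Λ ⧸ Λc.comap Λ.subtype, condDist Λ Λc P h₁ h₂ x w

/-- The lattice Gaussian sum `g_{z,θ}(L) = Σ_{λ∈L} (2πθ²)^{−n/2}·exp(−‖λ − z‖²/(2θ²))`. -/
def latticeGaussSum {n : ℕ} (L : Set (EuclideanSpace ℝ (Fin n))) (θ : ℝ)
    (z : EuclideanSpace ℝ (Fin n)) : ℝ :=
  ∑' l : L, (2 * Real.pi * θ ^ 2) ^ (-(n : ℝ) / 2) *
    Real.exp (-‖(l : EuclideanSpace ℝ (Fin n)) - z‖ ^ 2 / (2 * θ ^ 2))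

/-- The flatness factor `ε_Λ(θ) = sup_{x∈ℝⁿ} |covol(Λ)·g_{x,θ}(Λ) − 1|` of a full-rank
lattice `Λ`, where `covol(Λ)` is the volume of a fundamental domain of `Λ`. -/
def flatnessFactor {n : ℕ} (Λ : Submodule ℤ (EuclideanSpace ℝ (Fin n))) (θ : ℝ) : ℝ :=
  ⨆ x : EuclideanSpace ℝ (Fin n),
    |ZLattice.covolume Λ * latticeGaussSum (Λ : Set (EuclideanSpace ℝ (Fin n))) θ x - 1|

lemma aux_summable_exp {n : ℕ} (L : Submodule ℤ (EuclideanSpace ℝ (Fin n))) [DiscreteTopology L]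
    (c : ℝ) (hc : 0 < c) :
    Summable fun l : L => Real.exp (-(c * ‖(l : EuclideanSpace ℝ (Fin n))‖ ^ 2)) := by
  set k := Module.finrank ℤ L + 1 with hk
  have hs := ZLattice.summable_norm_pow_inv L (2 * k) (by omega)
  refine Summable.of_norm_bounded_eventually (hs.mul_left ((k.factorial : ℝ) / c ^ k)) ?_
  have : ({0} : Set L)ᶜ ∈ Filter.cofinite := (Set.finite_singleton (0 : L)).compl_mem_cofinite
  filter_upwards [this] with l hl
  have hl0 : l ≠ 0 := by simpa using hl
  have hpos : 0 < ‖l‖ := norm_pos_iff.mpr hl0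
  have h1 := Real.pow_div_factorial_le_exp (c * ‖l‖ ^ 2) (by positivity) k
  rw [Real.norm_eq_abs, abs_of_pos (Real.exp_pos _), Real.exp_neg]
  change (Real.exp (c * ‖l‖ ^ 2))⁻¹ ≤ _
  have h2 : (Real.exp (c * ‖l‖ ^ 2))⁻¹ ≤ ((c * ‖l‖ ^ 2) ^ k / (k.factorial : ℝ))⁻¹ :=
    inv_anti₀ (by positivity) h1
  refine h2.trans (le_of_eq ?_)
  rw [inv_div, mul_pow, ← pow_mul, inv_pow]
  field_simp

lemma aux_summable_exp_sub {n : ℕ} (L : Submodule ℤ (EuclideanSpace ℝ (Fin n)))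
    [DiscreteTopology L] (c : ℝ) (hc : 0 < c) (z : EuclideanSpace ℝ (Fin n)) :
    Summable fun l : L => Real.exp (-(c * ‖(l : EuclideanSpace ℝ (Fin n)) - z‖ ^ 2)) := by
  refine Summable.of_nonneg_of_le (fun _ => (Real.exp_pos _).le) ?_
    ((aux_summable_exp L (c / 2) (by positivity)).mul_left (Real.exp (c * ‖z‖ ^ 2)))
  intro l
  rw [← Real.exp_add]
  apply Real.exp_le_exp.mpr
  have h : ‖(l : EuclideanSpace ℝ (Fin n))‖ ≤ ‖(l : EuclideanSpace ℝ (Fin n)) - z‖ + ‖z‖ := by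
    simpa using norm_add_le ((l : EuclideanSpace ℝ (Fin n)) - z) z
  have h0 := norm_nonneg (l : EuclideanSpace ℝ (Fin n))
  have h3 : ‖(l : EuclideanSpace ℝ (Fin n))‖ ^ 2 ≤
      2 * ‖(l : EuclideanSpace ℝ (Fin n)) - z‖ ^ 2 + 2 * ‖z‖ ^ 2 := by
    nlinarith [sq_nonneg (‖(l : EuclideanSpace ℝ (Fin n)) - z‖ - ‖z‖)]
  nlinarith

lemma aux_bound {n : ℕ} (L : Submodule ℤ (EuclideanSpace ℝ (Fin n)))
    [DiscreteTopology L] [IsZLattice ℝ L] (c : ℝ) (hc : 0 < c) :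
    ∃ B : ℝ, ∀ z : EuclideanSpace ℝ (Fin n),
      ∑' l : L, Real.exp (-(c * ‖(l : EuclideanSpace ℝ (Fin n)) - z‖ ^ 2)) ≤ B := by
  let b0 := Module.Free.chooseBasis ℤ L
  let b := b0.ofZLatticeBasis ℝ
  let R := ∑ i, ‖b i‖
  refine ⟨Real.exp (c * R ^ 2) *
    ∑' l : L, Real.exp (-((c / 2) * ‖(l : EuclideanSpace ℝ (Fin n))‖ ^ 2)), fun z => ?_⟩
  have hfl : ((ZSpan.floor b z : Submodule.span ℤ (Set.range b)) :
      EuclideanSpace ℝ (Fin n)) ∈ L := by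
    have := (ZSpan.floor b z).2
    exact (b0.ofZLatticeBasis_span ℝ).le this
  set f : L := ⟨_, hfl⟩ with hf
  have hz : z = ZSpan.fract b z + (f : EuclideanSpace ℝ (Fin n)) := by
    simp [hf, ZSpan.fract_apply]
  set r := ZSpan.fract b z with hr
  have hrR : ‖r‖ ≤ R := ZSpan.norm_fract_le b z
  have h1 : ∑' l : L, Real.exp (-(c * ‖(l : EuclideanSpace ℝ (Fin n)) - z‖ ^ 2)) =
      ∑' l : L, Real.exp (-(c * ‖(l : EuclideanSpace ℝ (Fin n)) - r‖ ^ 2)) := by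
    rw [← (Equiv.addRight f).tsum_eq]
    refine tsum_congr fun l => ?_
    congr 4
    rw [hz]
    simp
  rw [h1, ← tsum_mul_left]
  refine Summable.tsum_le_tsum ?_ (aux_summable_exp_sub L c hc r)
    ((aux_summable_exp L (c / 2) (by positivity)).mul_left _)
  intro l
  rw [← Real.exp_add]
  apply Real.exp_le_exp.mpr
  have h : ‖(l : EuclideanSpace ℝ (Fin n))‖ ≤ ‖(l : EuclideanSpace ℝ (Fin n)) - r‖ + ‖r‖ := by
    simpa using norm_add_le ((l : EuclideanSpace ℝ (Fin n)) - r) r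
  have h0 := norm_nonneg (l : EuclideanSpace ℝ (Fin n))
  have h4 : ‖r‖ ^ 2 ≤ R ^ 2 := pow_le_pow_left₀ (norm_nonneg _) hrR 2
  have h3 : ‖(l : EuclideanSpace ℝ (Fin n))‖ ^ 2 ≤
      2 * ‖(l : EuclideanSpace ℝ (Fin n)) - r‖ ^ 2 + 2 * R ^ 2 := by
    nlinarith [sq_nonneg (‖(l : EuclideanSpace ℝ (Fin n)) - r‖ - ‖r‖)]
  nlinarith

lemma aux_lgs {n : ℕ} (L : Submodule ℤ (EuclideanSpace ℝ (Fin n))) (θ : ℝ)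
    (z : EuclideanSpace ℝ (Fin n)) :
    latticeGaussSum (L : Set (EuclideanSpace ℝ (Fin n))) θ z =
      (2 * Real.pi * θ ^ 2) ^ (-(n : ℝ) / 2) *
      ∑' l : L, Real.exp (-((1 / (2 * θ ^ 2)) * ‖(l : EuclideanSpace ℝ (Fin n)) - z‖ ^ 2)) := by
  unfold latticeGaussSum
  rw [tsum_mul_left]
  congr 1
  refine tsum_congr fun l => ?_
  congr 1
  ring

lemma aux_flat {n : ℕ} (L : Submodule ℤ (EuclideanSpace ℝ (Fin n)))
    [DiscreteTopology L] [IsZLattice ℝ L] (θ : ℝ) (hθ : 0 < θ) (z : EuclideanSpace ℝ (Fin n)) :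
    |ZLattice.covolume L * latticeGaussSum (L : Set (EuclideanSpace ℝ (Fin n))) θ z - 1| ≤
      flatnessFactor L θ := by
  unfold flatnessFactor
  refine le_ciSup (f := fun z => |ZLattice.covolume L *
    latticeGaussSum (L : Set (EuclideanSpace ℝ (Fin n))) θ z - 1|) ?_ z
  obtain ⟨B, hB⟩ := aux_bound L (1 / (2 * θ ^ 2)) (by positivity)
  refine ⟨ZLattice.covolume L * ((2 * Real.pi * θ ^ 2) ^ (-(n : ℝ) / 2) * B) + 1, ?_⟩
  rintro _ ⟨y, rfl⟩
  have hV : 0 < ZLattice.covolume L := ZLattice.covolume_pos L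
  have hK : 0 < (2 * Real.pi * θ ^ 2) ^ (-(n : ℝ) / 2) := by positivity
  have h0 : 0 ≤ ∑' l : L,
      Real.exp (-((1 / (2 * θ ^ 2)) * ‖(l : EuclideanSpace ℝ (Fin n)) - y‖ ^ 2)) :=
    tsum_nonneg fun _ => (Real.exp_pos _).le
  dsimp only
  rw [aux_lgs]
  have h1 := mul_le_mul_of_nonneg_left (mul_le_mul_of_nonneg_left (hB y) hK.le) hV.le
  have h2 := mul_nonneg hV.le (mul_nonneg hK.le h0)
  rw [abs_le]
  constructor <;> linarith

lemma aux_gauss_eq {n : ℕ} (P : ℝ) (w : EuclideanSpace ℝ (Fin n)) :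
    gaussDensity P w =
      (2 * Real.pi * P) ^ (-(n : ℝ) / 2) * Real.exp (-((1 / (2 * P)) * ‖w‖ ^ 2)) := by
  unfold gaussDensity
  congr 2
  ring

lemma aux_gauss_pos {n : ℕ} (P : ℝ) (hP : 0 < P) (w : EuclideanSpace ℝ (Fin n)) :
    0 < gaussDensity P w := by
  unfold gaussDensity
  positivity

/-- unnormalised pair sum -/
def auxF {n : ℕ} (Λ Λc : Submodule ℤ (EuclideanSpace ℝ (Fin n))) (P : ℝ) (h₁ h₂ : ℤ)
    (x y : Λ ⧸ Λc.comap Λ.subtype) (w : EuclideanSpace ℝ (Fin n)) : ℝ :=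
  ∑' p : {p : EuclideanSpace ℝ (Fin n) × EuclideanSpace ℝ (Fin n) //
          p.1 ∈ coset Λ Λc x ∧ p.2 ∈ coset Λ Λc y ∧
            (h₁ : ℝ) • p.1 + (h₂ : ℝ) • p.2 = w},
    gaussDensity P p.val.1 * gaussDensity P p.val.2

lemma aux_mk_eq {n : ℕ} {Λ Λc : Submodule ℤ (EuclideanSpace ℝ (Fin n))} (a b : Λ) :
    (Submodule.Quotient.mk a : Λ ⧸ Λc.comap Λ.subtype) = Submodule.Quotient.mk b ↔
      (a : EuclideanSpace ℝ (Fin n)) - b ∈ Λc := by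
  rw [Submodule.Quotient.eq]
  simp

lemma aux_F_zero {n : ℕ} (Λ Λc : Submodule ℤ (EuclideanSpace ℝ (Fin n))) (P : ℝ) (h₁ h₂ : ℤ)
    (x y : Λ ⧸ Λc.comap Λ.subtype) (w : Λ)
    (h : Submodule.Quotient.mk w ≠ h₁ • x + h₂ • y) :
    auxF Λ Λc P h₁ h₂ x y w = 0 := by
  unfold auxF
  have : IsEmpty {p : EuclideanSpace ℝ (Fin n) × EuclideanSpace ℝ (Fin n) //
          p.1 ∈ coset Λ Λc x ∧ p.2 ∈ coset Λ Λc y ∧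
            (h₁ : ℝ) • p.1 + (h₂ : ℝ) • p.2 = (w : EuclideanSpace ℝ (Fin n))} := by
    constructor
    rintro ⟨⟨u, v⟩, ⟨hu, hux⟩, ⟨hv, hvy⟩, hw⟩
    apply h
    subst hux hvy
    rw [← Submodule.Quotient.mk_smul, ← Submodule.Quotient.mk_smul, ← Submodule.Quotient.mk_add]
    congr 1
    apply Subtype.ext
    simpa [Int.cast_smul_eq_zsmul] using hw.symm
  exact tsum_empty

lemma aux_norm {n : ℕ} (a b H : ℝ) (hH : H = a ^ 2 + b ^ 2) (hpos : 0 < H)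
    (u v t : EuclideanSpace ℝ (Fin n)) :
    ‖u + b • t‖ ^ 2 + ‖v - a • t‖ ^ 2 =
      ‖a • u + b • v‖ ^ 2 / H + H * ‖t - (1 / H) • (a • v - b • u)‖ ^ 2 := by
  have hH0 : H ≠ 0 := hpos.ne'
  simp only [norm_add_sq_real, norm_sub_sq_real, norm_smul, inner_smul_left, inner_smul_right,
    inner_sub_right, mul_pow, Real.norm_eq_abs, sq_abs, RCLike.conj_to_real,
    real_inner_comm u v, real_inner_comm u t, real_inner_comm v t]
  field_simp
  subst hH
  ring

/-- normalising constant -/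
def auxK (n : ℕ) (P H : ℝ) : ℝ :=
  (2 * Real.pi * P) ^ (-(n : ℝ) / 2) * (2 * Real.pi * P) ^ (-(n : ℝ) / 2) /
    (2 * Real.pi * (P / H)) ^ (-(n : ℝ) / 2)

/-- Gaussian of the sum -/
def auxC {n : ℕ} (P H : ℝ) (w : EuclideanSpace ℝ (Fin n)) : ℝ :=
  auxK n P H * Real.exp (-((1 / (2 * P * H)) * ‖w‖ ^ 2))

lemma aux_F_eq {n : ℕ} (Λ Λc : Submodule ℤ (EuclideanSpace ℝ (Fin n))) (hle : Λc ≤ Λ)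
    (P : ℝ) (hP : 0 < P) (h₁ h₂ : ℤ) (hh₁ : h₁ ≠ 0)
    (hco : IsCoprime h₁ h₂)
    (x y : Λ ⧸ Λc.comap Λ.subtype) (w : Λ)
    (h : Submodule.Quotient.mk w = h₁ • x + h₂ • y) :
    ∃ z : EuclideanSpace ℝ (Fin n), auxF Λ Λc P h₁ h₂ x y w =
      auxC P ((h₁ : ℝ) ^ 2 + (h₂ : ℝ) ^ 2) (w : EuclideanSpace ℝ (Fin n)) *
      latticeGaussSum (Λc : Set (EuclideanSpace ℝ (Fin n)))
        (Real.sqrt (P / ((h₁ : ℝ) ^ 2 + (h₂ : ℝ) ^ 2))) z := by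
  obtain ⟨a, b, hab⟩ := hco
  -- find a solution
  obtain ⟨u0, v0, hu0, hv0, huv⟩ : ∃ u v : Λ, Submodule.Quotient.mk u = x ∧
      Submodule.Quotient.mk v = y ∧ h₁ • u + h₂ • v = w := by
    obtain ⟨u, rfl⟩ := Submodule.Quotient.mk_surjective _ x
    obtain ⟨v, rfl⟩ := Submodule.Quotient.mk_surjective _ y
    rw [← Submodule.Quotient.mk_smul, ← Submodule.Quotient.mk_smul, ← Submodule.Quotient.mk_add,
      Submodule.Quotient.eq] at h
    refine ⟨u + a • (w - (h₁ • u + h₂ • v)), v + b • (w - (h₁ • u + h₂ • v)), ?_, ?_, ?_⟩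
    · rw [Submodule.Quotient.eq]
      simpa using (Λc.comap Λ.subtype).smul_mem a h
    · rw [Submodule.Quotient.eq]
      simpa using (Λc.comap Λ.subtype).smul_mem b h
    · have : h₁ • (u + a • (w - (h₁ • u + h₂ • v))) + h₂ • (v + b • (w - (h₁ • u + h₂ • v))) =
          (h₁ • u + h₂ • v) + (a * h₁ + b * h₂) • (w - (h₁ • u + h₂ • v)) := by module
      rw [this, hab]
      module
  set H : ℝ := (h₁ : ℝ) ^ 2 + (h₂ : ℝ) ^ 2 with hH
  have hHpos : 0 < H := by
    have : (h₁ : ℝ) ≠ 0 := by exact_mod_cast hh₁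
    positivity
  have hw : (h₁ : ℝ) • (u0 : EuclideanSpace ℝ (Fin n)) + (h₂ : ℝ) • (v0 : EuclideanSpace ℝ (Fin n))
      = w := by
    rw [← huv]
    simp [Int.cast_smul_eq_zsmul]
  refine ⟨(1 / H) • ((h₁ : ℝ) • (v0 : EuclideanSpace ℝ (Fin n)) -
    (h₂ : ℝ) • (u0 : EuclideanSpace ℝ (Fin n))), ?_⟩
  let e : Λc ≃ {p : EuclideanSpace ℝ (Fin n) × EuclideanSpace ℝ (Fin n) //
          p.1 ∈ coset Λ Λc x ∧ p.2 ∈ coset Λ Λc y ∧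
            (h₁ : ℝ) • p.1 + (h₂ : ℝ) • p.2 = (w : EuclideanSpace ℝ (Fin n))} :=
    { toFun := fun t => ⟨((u0 : EuclideanSpace ℝ (Fin n)) + (h₂ : ℝ) • (t : EuclideanSpace ℝ (Fin n)),
          (v0 : EuclideanSpace ℝ (Fin n)) - (h₁ : ℝ) • (t : EuclideanSpace ℝ (Fin n))), by
            have ht2 : (h₂ : ℝ) • (t : EuclideanSpace ℝ (Fin n)) ∈ Λc := by
              rw [Int.cast_smul_eq_zsmul]; exact Λc.smul_mem _ t.2
            have ht1 : (h₁ : ℝ) • (t : EuclideanSpace ℝ (Fin n)) ∈ Λc := by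
              rw [Int.cast_smul_eq_zsmul]; exact Λc.smul_mem _ t.2
            refine ⟨⟨Λ.add_mem u0.2 (hle ht2), ?_⟩, ⟨Λ.sub_mem v0.2 (hle ht1), ?_⟩, ?_⟩
            · rw [← hu0, aux_mk_eq]
              simpa using ht2
            · rw [← hv0, aux_mk_eq]
              simpa using ht1
            · rw [← hw]
              module⟩
      invFun := fun p => ⟨(b : ℤ) • (p.1.1 - u0) - (a : ℤ) • (p.1.2 - v0), by
            obtain ⟨⟨u, v⟩, ⟨hu, hux⟩, ⟨hv, hvy⟩, hpw⟩ := p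
            rw [← hu0, aux_mk_eq] at hux
            rw [← hv0, aux_mk_eq] at hvy
            exact Λc.sub_mem (Λc.smul_mem _ hux) (Λc.smul_mem _ hvy)⟩
      left_inv := by
        intro t
        apply Subtype.ext
        have habr : (a : ℝ) * h₁ + b * h₂ = 1 := by exact_mod_cast hab
        simp only [← Int.cast_smul_eq_zsmul ℝ]
        calc _ = ((a : ℝ) * h₁ + b * h₂) • (t : EuclideanSpace ℝ (Fin n)) := by module
          _ = t := by rw [habr, one_smul]
      right_inv := by
        rintro ⟨⟨u, v⟩, ⟨hu, hux⟩, ⟨hv, hvy⟩, hpw⟩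
        have habr : (a : ℝ) * h₁ + b * h₂ = 1 := by exact_mod_cast hab
        apply Subtype.ext
        simp only [← Int.cast_smul_eq_zsmul ℝ]
        dsimp only at hpw
        have hd : (h₁ : ℝ) • (u - u0) + (h₂ : ℝ) • (v - v0) = 0 := by
          have : (h₁ : ℝ) • (u - (u0 : EuclideanSpace ℝ (Fin n))) + (h₂ : ℝ) • (v - v0) =
            ((h₁ : ℝ) • u + (h₂ : ℝ) • v) - ((h₁ : ℝ) • (u0 : EuclideanSpace ℝ (Fin n)) +
              (h₂ : ℝ) • (v0 : EuclideanSpace ℝ (Fin n))) := by module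
          rw [this, hpw, hw, sub_self]
        refine Prod.ext ?_ ?_
        · dsimp only
          calc _ = (u0 : EuclideanSpace ℝ (Fin n)) + ((a : ℝ) * h₁ + b * h₂) • (u - u0)
                - (a : ℝ) • ((h₁ : ℝ) • (u - u0) + (h₂ : ℝ) • (v - v0)) := by module
            _ = u := by rw [habr, hd]; module
        · dsimp only
          calc _ = (v0 : EuclideanSpace ℝ (Fin n)) + ((a : ℝ) * h₁ + b * h₂) • (v - v0)
                - (b : ℝ) • ((h₁ : ℝ) • (u - u0) + (h₂ : ℝ) • (v - v0)) := by module
            _ = v := by rw [habr, hd]; module }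
  unfold auxF
  rw [← e.tsum_eq, aux_lgs, Real.sq_sqrt (by positivity)]
  have hK : (2 * Real.pi * (P / H)) ^ (-(n : ℝ) / 2) ≠ 0 := by positivity
  rw [← mul_assoc, ← tsum_mul_left]
  refine tsum_congr fun t => ?_
  change gaussDensity P ((u0 : EuclideanSpace ℝ (Fin n)) + (h₂ : ℝ) • (t : EuclideanSpace ℝ (Fin n)))
    * gaussDensity P ((v0 : EuclideanSpace ℝ (Fin n)) - (h₁ : ℝ) • (t : EuclideanSpace ℝ (Fin n))) = _
  have hn := aux_norm (h₁ : ℝ) (h₂ : ℝ) H hH hHpos (u0 : EuclideanSpace ℝ (Fin n)) v0 t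
  rw [hw] at hn
  rw [aux_gauss_eq, aux_gauss_eq, auxC, auxK]
  set A := (2 * Real.pi * P) ^ (-(n : ℝ) / 2)
  set B := (2 * Real.pi * (P / H)) ^ (-(n : ℝ) / 2)
  have e1 : ∀ p q : ℝ, A * Real.exp p * (A * Real.exp q) = A * A * Real.exp (p + q) := by
    intro p q; rw [Real.exp_add]; ring
  have e2 : ∀ p q : ℝ, A * A / B * Real.exp p * B * Real.exp q = A * A * Real.exp (p + q) := by
    intro p q; rw [Real.exp_add]; field_simp
  rw [e1, e2]
  congr 2
  have e3 : ∀ p q : ℝ, -(1 / (2 * P) * p) + -(1 / (2 * P) * q) = -(1 / (2 * P) * (p + q)) := by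
    intro p q; ring
  rw [e3, hn]
  field_simp
  ring

lemma aux_coset_summable {n : ℕ} (Λ Λc : Submodule ℤ (EuclideanSpace ℝ (Fin n)))
    [DiscreteTopology Λ] (P : ℝ) (hP : 0 < P) (x : Λ ⧸ Λc.comap Λ.subtype) :
    Summable fun u : coset Λ Λc x => gaussDensity P (u : EuclideanSpace ℝ (Fin n)) := by
  have h := (aux_summable_exp Λ (1 / (2 * P)) (by positivity)).mul_left
    ((2 * Real.pi * P) ^ (-(n : ℝ) / 2))
  let i : coset Λ Λc x → Λ := fun u => ⟨u.1, u.2.choose⟩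
  have hi : Function.Injective i := by
    intro u v huv
    apply Subtype.ext
    exact congrArg (fun l : Λ => (l : EuclideanSpace ℝ (Fin n))) huv
  refine (h.comp_injective hi).congr fun u => ?_
  rw [aux_gauss_eq]
  rfl

lemma aux_mass_pos {n : ℕ} (Λ Λc : Submodule ℤ (EuclideanSpace ℝ (Fin n)))
    [DiscreteTopology Λ] (P : ℝ) (hP : 0 < P) (x : Λ ⧸ Λc.comap Λ.subtype) :
    0 < cosetMass Λ Λc P x := by
  obtain ⟨u, hu⟩ := Submodule.Quotient.mk_surjective _ x
  exact (aux_coset_summable Λ Λc P hP x).tsum_pos (fun _ => (aux_gauss_pos P hP _).le)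
    ⟨u.1, u.2, hu⟩ (aux_gauss_pos P hP _)

lemma aux_hasSum_F {n : ℕ} (Λ Λc : Submodule ℤ (EuclideanSpace ℝ (Fin n)))
    [DiscreteTopology Λ] (P : ℝ) (hP : 0 < P) (h₁ h₂ : ℤ) (x y : Λ ⧸ Λc.comap Λ.subtype) :
    HasSum (fun w : Λ => auxF Λ Λc P h₁ h₂ x y w)
      (cosetMass Λ Λc P x * cosetMass Λ Λc P y) := by
  have hx := aux_coset_summable Λ Λc P hP x
  have hy := aux_coset_summable Λ Λc P hP y
  have hs := hx.mul_of_nonneg hy (fun _ => (aux_gauss_pos P hP _).le)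
    (fun _ => (aux_gauss_pos P hP _).le)
  have hprod := hx.hasSum.mul hy.hasSum hs
  let g : coset Λ Λc x × coset Λ Λc y → Λ := fun p =>
    h₁ • (⟨p.1.1, p.1.2.choose⟩ : Λ) + h₂ • (⟨p.2.1, p.2.2.choose⟩ : Λ)
  have hg : ∀ p, (g p : EuclideanSpace ℝ (Fin n)) = (h₁ : ℝ) • p.1.1 + (h₂ : ℝ) • p.2.1 := by
    intro p
    simp [g, Int.cast_smul_eq_zsmul]
  have hfib := hprod.tsum_fiberwise g
  convert! hfib using 2 with w
  unfold auxF
  let e : g ⁻¹' {w} ≃ {p : EuclideanSpace ℝ (Fin n) × EuclideanSpace ℝ (Fin n) //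
          p.1 ∈ coset Λ Λc x ∧ p.2 ∈ coset Λ Λc y ∧
            (h₁ : ℝ) • p.1 + (h₂ : ℝ) • p.2 = (w : EuclideanSpace ℝ (Fin n))} :=
    { toFun := fun p => ⟨(p.1.1.1, p.1.2.1), p.1.1.2, p.1.2.2, by
        have := p.2
        rw [Set.mem_preimage, Set.mem_singleton_iff] at this
        rw [← hg, this]⟩
      invFun := fun p => ⟨(⟨p.1.1, p.2.1⟩, ⟨p.1.2, p.2.2.1⟩), by
        rw [Set.mem_preimage, Set.mem_singleton_iff]
        apply Subtype.ext
        rw [hg]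
        exact p.2.2.2⟩
      left_inv := fun _ => rfl
      right_inv := fun _ => rfl }
  rw [← e.tsum_eq]
  rfl

/-- **variational-distance bound.** Let `Λc ⊆ Λ` be nested lattices in `ℝⁿ`
with finite quotient `Λ/Λc` of cardinality `M`, and let `h₁, h₂` be nonzero coprime integers
such that no nonzero element of `Λ/Λc` has order dividing `h₁` or `h₂`. Fix `P > 0` and let
`ε = ε_{Λc}(√(P/(h₁²+h₂²)))` be the flatness factor of `Λc`. If `ε < 1/2`, then for every
coset `x` of `Λc` in `Λ`, the variational distance between the conditional law `P_x` of
`W = h₁·U + h₂·V` and its average `P̄` satisfies `Σ_{w∈Λ} |P_x(w) − P̄(w)| ≤ 16ε`. -/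
theorem stmt_1 {n : ℕ} (Λ Λc : Submodule ℤ (EuclideanSpace ℝ (Fin n)))
    [DiscreteTopology Λ] [DiscreteTopology Λc] [IsZLattice ℝ Λc] (hle : Λc ≤ Λ)
    [Finite (Λ ⧸ Λc.comap Λ.subtype)] (M : ℕ) (hM : Nat.card (Λ ⧸ Λc.comap Λ.subtype) = M)
    (h₁ h₂ : ℤ) (hh₁ : h₁ ≠ 0) (hh₂ : h₂ ≠ 0) (hco : IsCoprime h₁ h₂)
    (horder : ∀ l ∈ Λ, l ∉ Λc → h₁ • l ∉ Λc ∧ h₂ • l ∉ Λc)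
    (P : ℝ) (hP : 0 < P)
    (hε : flatnessFactor Λc (Real.sqrt (P / ((h₁ : ℝ) ^ 2 + (h₂ : ℝ) ^ 2))) < 1 / 2) :
    ∀ x : Λ ⧸ Λc.comap Λ.subtype,
      (∑' w : Λ, |condDist Λ Λc P h₁ h₂ x (w : EuclideanSpace ℝ (Fin n)) -
          avgDist Λ Λc P h₁ h₂ (w : EuclideanSpace ℝ (Fin n))|) ≤
        16 * flatnessFactor Λc (Real.sqrt (P / ((h₁ : ℝ) ^ 2 + (h₂ : ℝ) ^ 2))) := by
  intro x
  classical
  have : Fintype (Λ ⧸ Λc.comap Λ.subtype) := Fintype.ofFinite _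
  set H : ℝ := (h₁ : ℝ) ^ 2 + (h₂ : ℝ) ^ 2 with hH
  have hHpos : 0 < H := by
    have : (h₁ : ℝ) ≠ 0 := by exact_mod_cast hh₁
    positivity
  set θ := Real.sqrt (P / H) with hθ
  have hθpos : 0 < θ := Real.sqrt_pos.mpr (by positivity)
  set ε := flatnessFactor Λc θ with hεdef
  have hε0 : 0 ≤ ε := (abs_nonneg _).trans (aux_flat Λc θ hθpos 0)
  set V := ZLattice.covolume Λc with hVdef
  have hV : 0 < V := ZLattice.covolume_pos Λc
  have hCpos : ∀ w : EuclideanSpace ℝ (Fin n), 0 < auxC P H w := by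
    intro w
    unfold auxC auxK
    positivity
  let Cc : (Λ ⧸ Λc.comap Λ.subtype) → Λ → ℝ := fun c w =>
    if Submodule.Quotient.mk w = c then auxC P H (w : EuclideanSpace ℝ (Fin n)) else 0
  have hCc0 : ∀ c w, 0 ≤ Cc c w := by
    intro c w
    dsimp only [Cc]
    split_ifs
    · exact (hCpos _).le
    · exact le_rfl
  have hCsum : Summable fun w : Λ => auxC P H (w : EuclideanSpace ℝ (Fin n)) :=
    (aux_summable_exp Λ (1 / (2 * P * H)) (by positivity)).mul_left _
  have hCcsum : ∀ c, Summable (Cc c) := by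
    intro c
    refine Summable.of_nonneg_of_le (hCc0 c) (fun w => ?_) hCsum
    dsimp only [Cc]
    split_ifs
    · exact le_rfl
    · exact (hCpos _).le
  let D : (Λ ⧸ Λc.comap Λ.subtype) → ℝ := fun c => ∑' w, Cc c w
  have hD : ∀ c, 0 < D c := by
    intro c
    obtain ⟨u, hu⟩ := Submodule.Quotient.mk_surjective _ c
    refine (hCcsum c).tsum_pos (hCc0 c) u ?_
    dsimp only [Cc]
    rw [if_pos hu]
    exact hCpos _
  have hF : ∀ x y : Λ ⧸ Λc.comap Λ.subtype, ∀ w : Λ,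
      (1 - ε) * Cc (h₁ • x + h₂ • y) w ≤ V * auxF Λ Λc P h₁ h₂ x y w ∧
      V * auxF Λ Λc P h₁ h₂ x y w ≤ (1 + ε) * Cc (h₁ • x + h₂ • y) w := by
    intro x y w
    by_cases h : Submodule.Quotient.mk w = h₁ • x + h₂ • y
    · obtain ⟨z, hz⟩ := aux_F_eq Λ Λc hle P hP h₁ h₂ hh₁ hco x y w h
      have hfl := abs_le.mp (aux_flat Λc θ hθpos z)
      dsimp only [Cc]
      rw [if_pos h, hz]
      have hc := hCpos (w : EuclideanSpace ℝ (Fin n))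
      constructor <;> nlinarith
    · dsimp only [Cc]
      rw [if_neg h, aux_F_zero Λ Λc P h₁ h₂ x y w h]
      simp
  have hG : ∀ x y : Λ ⧸ Λc.comap Λ.subtype,
      (1 - ε) * D (h₁ • x + h₂ • y) ≤ V * (cosetMass Λ Λc P x * cosetMass Λ Λc P y) ∧
      V * (cosetMass Λ Λc P x * cosetMass Λ Λc P y) ≤ (1 + ε) * D (h₁ • x + h₂ • y) := by
    intro x y
    have hs := (aux_hasSum_F Λ Λc P hP h₁ h₂ x y).mul_left V
    have hd := (hCcsum (h₁ • x + h₂ • y)).hasSum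
    exact ⟨hasSum_le (fun w => (hF x y w).1) (hd.mul_left _) hs,
      hasSum_le (fun w => (hF x y w).2) hs (hd.mul_left _)⟩
  set α := (1 - ε) / (1 + ε) with hα
  set β := (1 + ε) / (1 - ε) with hβ
  have hpair : ∀ x y : Λ ⧸ Λc.comap Λ.subtype, ∀ w : Λ,
      α * (Cc (h₁ • x + h₂ • y) w / D (h₁ • x + h₂ • y)) ≤
        auxF Λ Λc P h₁ h₂ x y w / (cosetMass Λ Λc P x * cosetMass Λ Λc P y) ∧
      auxF Λ Λc P h₁ h₂ x y w / (cosetMass Λ Λc P x * cosetMass Λ Λc P y) ≤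
        β * (Cc (h₁ • x + h₂ • y) w / D (h₁ • x + h₂ • y)) := by
    intro x y w
    obtain ⟨f1, f2⟩ := hF x y w
    obtain ⟨g1, g2⟩ := hG x y
    have hd := hD (h₁ • x + h₂ • y)
    have hc := hCc0 (h₁ • x + h₂ • y) w
    have hgg := mul_pos (aux_mass_pos Λ Λc P hP x) (aux_mass_pos Λ Λc P hP y)
    have e1 : (0 : ℝ) < 1 - ε := by linarith
    have e2 : (0 : ℝ) < 1 + ε := by linarith
    rw [hα, hβ, ← mul_div_mul_left (auxF Λ Λc P h₁ h₂ x y w) _ hV.ne', div_mul_div_comm, div_mul_div_comm]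
    constructor
    · exact div_le_div₀ ((mul_nonneg e1.le hc).trans f1) f1 (mul_pos hV hgg) g2
    · exact div_le_div₀ (mul_nonneg e2.le hc) f2 (mul_pos e1 hd) g1
  let q : Λ → ℝ := fun w => ∑ c, Cc c w / D c
  have hbij : ∀ x : Λ ⧸ Λc.comap Λ.subtype,
      Function.Bijective fun y : Λ ⧸ Λc.comap Λ.subtype => h₁ • x + h₂ • y := by
    intro x
    rw [← Finite.injective_iff_bijective]
    intro y y' hyy
    have h2 : h₂ • y = h₂ • y' := add_left_cancel hyy
    obtain ⟨v, rfl⟩ := Submodule.Quotient.mk_surjective _ y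
    obtain ⟨v', rfl⟩ := Submodule.Quotient.mk_surjective _ y'
    rw [← Submodule.Quotient.mk_smul, ← Submodule.Quotient.mk_smul, aux_mk_eq] at h2
    rw [aux_mk_eq]
    by_contra hcon
    apply (horder _ (Λ.sub_mem v.2 v'.2) hcon).2
    rw [smul_sub]
    simpa using h2
  have hq : ∀ x w, ∑ y, Cc (h₁ • x + h₂ • y) w / D (h₁ • x + h₂ • y) = q w := by
    intro x w
    exact (hbij x).sum_comp (fun c => Cc c w / D c)
  have hcard : (0 : ℝ) < Nat.card (Λ ⧸ Λc.comap Λ.subtype) := by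
    exact_mod_cast Nat.card_pos
  set m : ℝ := (Nat.card (Λ ⧸ Λc.comap Λ.subtype) : ℝ) with hm
  have hcond : ∀ x : Λ ⧸ Λc.comap Λ.subtype, ∀ w : Λ,
      condDist Λ Λc P h₁ h₂ x w =
        1 / m * ∑ y, auxF Λ Λc P h₁ h₂ x y w / (cosetMass Λ Λc P x * cosetMass Λ Λc P y) := by
    intro x w
    unfold condDist
    rw [tsum_fintype]
    congr 1
    refine Finset.sum_congr rfl fun y _ => ?_
    unfold auxF
    rw [← tsum_div_const]
    refine tsum_congr fun p => ?_
    rw [div_mul_div_comm]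
  have hP1 : ∀ x : Λ ⧸ Λc.comap Λ.subtype, ∀ w : Λ,
      α * (q w / m) ≤ condDist Λ Λc P h₁ h₂ x w ∧
      condDist Λ Λc P h₁ h₂ x w ≤ β * (q w / m) := by
    intro x w
    have s1 := Finset.sum_le_sum fun y (_ : y ∈ Finset.univ) => (hpair x y w).1
    have s2 := Finset.sum_le_sum fun y (_ : y ∈ Finset.univ) => (hpair x y w).2
    rw [← Finset.mul_sum, hq] at s1 s2
    rw [hcond, one_div_mul_eq_div, ← mul_div_assoc, ← mul_div_assoc]
    exact ⟨div_le_div_of_nonneg_right s1 hcard.le, div_le_div_of_nonneg_right s2 hcard.le⟩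
  have hcardsum : ∀ r : ℝ, ∑ _x : Λ ⧸ Λc.comap Λ.subtype, r = m * r := by
    intro r
    rw [Finset.sum_const, nsmul_eq_mul, Finset.card_univ, hm, Nat.card_eq_fintype_card]
  have hP2 : ∀ w : Λ, α * (q w / m) ≤ avgDist Λ Λc P h₁ h₂ w ∧
      avgDist Λ Λc P h₁ h₂ w ≤ β * (q w / m) := by
    intro w
    have s1 := Finset.sum_le_sum fun y (_ : y ∈ Finset.univ) => (hP1 y w).1
    have s2 := Finset.sum_le_sum fun y (_ : y ∈ Finset.univ) => (hP1 y w).2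
    rw [hcardsum] at s1 s2
    unfold avgDist
    rw [tsum_fintype, one_div_mul_eq_div, le_div_iff₀' hcard, div_le_iff₀' hcard]
    exact ⟨s1, s2⟩
  have hqs : HasSum q m := by
    have h := hasSum_sum (s := Finset.univ) (f := fun c w => Cc c w / D c) (a := fun _ => (1 : ℝ))
      (fun c _ => by
        have := (hCcsum c).hasSum.div_const (D c)
        rwa [show (∑' w, Cc c w) = D c from rfl, div_self (hD c).ne'] at this)
    rw [hcardsum, mul_one] at h
    exact h
  have hle : ∀ w : Λ, |condDist Λ Λc P h₁ h₂ x w - avgDist Λ Λc P h₁ h₂ w| ≤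
      (β - α) * (q w / m) := by
    intro w
    have a1 := hP1 x w
    have a2 := hP2 w
    rw [abs_le]
    constructor <;> linarith [a1.1, a1.2, a2.1, a2.2]
  have htot : HasSum (fun w => (β - α) * (q w / m)) (β - α) := by
    have := (hqs.div_const m).mul_left (β - α)
    rwa [div_self hcard.ne', mul_one] at this
  have hfin : β - α ≤ 16 * ε := by
    have e1 : (0 : ℝ) < 1 - ε := by linarith
    have e2 : (0 : ℝ) < 1 + ε := by linarith
    rw [hα, hβ, div_sub_div _ _ e1.ne' e2.ne', div_le_iff₀ (mul_pos e1 e2)]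
    nlinarith [mul_nonneg hε0 hε0, mul_nonneg hε0 (mul_nonneg hε0 hε0)]
  have hsumm := Summable.of_nonneg_of_le (fun w => abs_nonneg _) hle htot.summable
  exact (hasSum_le hle hsumm.hasSum htot).trans hfin

end
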